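/- arXiv:1508.05688 — 3 statements merged into one kernel-verified Lean document; each statement's English description precedes it below -/
import Mathlib

section
/- For every m ≥ 1, every k ≥ 1, and every function i : {1,…,2k} → {1,…,m+1}, the even moments of the unit sphere are given by the Wick-type formula ∫_{S^m} x_{i(1)} x_{i(2)} ⋯ x_{i(2k)} dσ(x) = (Vol(S^m)·(m−1)!!/(m+2k−1)!!) · Σ_M Π_{{p,q} ∈ M} δ_{i(p) i(q)}, where the sum runs over all partitions M of the index set {1,…,2k} into k unordered pairs, and δ_{ab} is the Kronecker delta. (Equivalently, the moment tensor equals (Vol(S^m)(m−1)!!/(k!(m+2k−1)!!))·δ^{⊙k}, where δ^{⊙k} is the k-fold unnormalized symmetric power of the Kronecker delta, which equals k! times the sum over pairings.) -/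
open MeasureTheory

theorem sphere_finite (m : ℕ) :
    μH[(m : ℝ)] (Metric.sphere (0 : EuclideanSpace ℝ (Fin (m + 1))) 1) < ⊤ := by
  let Φ : Fin (m + 1) → ℝ → (Fin m → ℝ) → EuclideanSpace ℝ (Fin (m + 1)) := fun j s y =>
    WithLp.toLp 2 (Fin.insertNth (α := fun _ => ℝ) j s y)
  let Ψ : Fin (m + 1) → ℝ → (Fin m → ℝ) → EuclideanSpace ℝ (Fin (m + 1)) := fun j s y =>
    ‖Φ j s y‖⁻¹ • Φ j s y
  let K : Set (Fin m → ℝ) := Set.Icc (fun _ => -1) (fun _ => 1)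
  have hΦ : ∀ j s, ContDiff ℝ 1 (Φ j s) := by
    intro j s
    rw [contDiff_euclidean]
    intro c
    refine Fin.succAboveCases j ?_ (fun l => ?_) c
    · simp only [Φ, Fin.insertNth_apply_same]; fun_prop
    · simp only [Φ, Fin.insertNth_apply_succAbove]; fun_prop
  have hne : ∀ j s y, s ≠ 0 → Φ j s y ≠ 0 := by
    intro j s y hs h
    apply hs
    have := congrArg (fun z : EuclideanSpace ℝ (Fin (m + 1)) => z j) h
    simpa [Φ] using this
  have hfin : ∀ j s, s ≠ 0 → μH[(m : ℝ)] (Ψ j s '' K) < ⊤ := by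
    intro j s hs
    have hΨ : ContDiff ℝ 1 (Ψ j s) :=
      (((hΦ j s).norm ℝ fun y => hne j s y hs).inv
        (fun y => norm_ne_zero_iff.2 (hne j s y hs))).smul (hΦ j s)
    obtain ⟨C, hC⟩ := hΨ.contDiffOn.exists_lipschitzOnWith (s := K) one_ne_zero
      (convex_Icc _ _) isCompact_Icc
    refine (hC.hausdorffMeasure_image_le (Nat.cast_nonneg m)).trans_lt ?_
    have h2 := hausdorffMeasure_pi_real (ι := Fin m)
    rw [Fintype.card_fin] at h2
    rw [h2]
    exact ENNReal.mul_lt_top (ENNReal.rpow_lt_top_of_nonneg (Nat.cast_nonneg m) ENNReal.coe_ne_top)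
      isCompact_Icc.measure_lt_top
  have hsub : Metric.sphere (0 : EuclideanSpace ℝ (Fin (m + 1))) 1 ⊆
      ⋃ j : Fin (m + 1), (Ψ j 1 '' K ∪ Ψ j (-1) '' K) := by
    intro x hx
    have hx1 : ‖x‖ = 1 := by simpa using hx
    obtain ⟨j, -, hj⟩ := Finset.exists_max_image (Finset.univ : Finset (Fin (m + 1)))
      (fun j => |x j|) Finset.univ_nonempty
    have hxj : x j ≠ 0 := by
      intro h0
      have : x = 0 := by
        ext c
        have := hj c (Finset.mem_univ _)
        rw [h0] at this
        simpa using this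
      rw [this] at hx1
      simp at hx1
    have hpos : 0 < |x j| := abs_pos.2 hxj
    have hmem : (fun l : Fin m => |x j|⁻¹ * x (j.succAbove l)) ∈ K := by
      have : ∀ l : Fin m, |(|x j|⁻¹ * x (j.succAbove l))| ≤ 1 := by
        intro l
        rw [abs_mul, abs_inv, abs_abs, inv_mul_le_iff₀ hpos, mul_one]
        exact hj _ (Finset.mem_univ _)
      exact ⟨fun l => (abs_le.1 (this l)).1, fun l => (abs_le.1 (this l)).2⟩
    have hs : Ψ j (|x j|⁻¹ * x j) (fun l : Fin m => |x j|⁻¹ * x (j.succAbove l)) = x := by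
      have : Φ j (|x j|⁻¹ * x j) (fun l : Fin m => |x j|⁻¹ * x (j.succAbove l)) = |x j|⁻¹ • x := by
        ext c
        refine Fin.succAboveCases j ?_ (fun l => ?_) c
        · simp [Φ]
        · simp [Φ]
      simp only [Ψ, this]
      rw [norm_smul, hx1, smul_smul]
      simp [hxj]
    refine Set.mem_iUnion.2 ⟨j, ?_⟩
    rcases lt_or_gt_of_ne hxj with h | h
    · right
      refine ⟨_, hmem, ?_⟩
      have e : |x j|⁻¹ * x j = -1 := by rw [abs_of_neg h]; field_simp
      rw [e] at hs; exact hs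
    · left
      refine ⟨_, hmem, ?_⟩
      have e : |x j|⁻¹ * x j = 1 := by rw [abs_of_pos h]; field_simp
      rw [e] at hs; exact hs
  refine (measure_mono hsub).trans_lt ?_
  refine (measure_iUnion_le _).trans_lt ?_
  rw [tsum_fintype]
  refine ENNReal.sum_lt_top.2 fun j _ => ?_
  exact (measure_union_le _ _).trans_lt
    (ENNReal.add_lt_top.2 ⟨hfin j 1 one_ne_zero, hfin j (-1) (by norm_num)⟩)

noncomputable def rotc {n : ℕ} (a b : Fin n) (t : ℝ) (x : EuclideanSpace ℝ (Fin n)) (c : Fin n) : ℝ :=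
  x c + (Real.cos t - 1) * ((if c = a then x a else 0) + (if c = b then x b else 0)) +
    Real.sin t * ((if c = b then x a else 0) - (if c = a then x b else 0))

noncomputable def rotd {n : ℕ} (a b : Fin n) (t : ℝ) (x : EuclideanSpace ℝ (Fin n)) (c : Fin n) : ℝ :=
  (-Real.sin t) * ((if c = a then x a else 0) + (if c = b then x b else 0)) +
    Real.cos t * ((if c = b then x a else 0) - (if c = a then x b else 0))

theorem rotc_deriv {n : ℕ} (a b : Fin n) (t : ℝ) (x : EuclideanSpace ℝ (Fin n)) (c : Fin n) :
    HasDerivAt (fun t => rotc a b t x c) (rotd a b t x c) t := by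
  unfold rotc rotd
  exact ((((Real.hasDerivAt_cos t).sub_const 1).mul_const _).const_add _).add
    ((Real.hasDerivAt_sin t).mul_const _)

theorem rotc_cont {n : ℕ} (a b : Fin n) (c : Fin n) :
    Continuous (fun z : ℝ × EuclideanSpace ℝ (Fin n) => rotc a b z.1 z.2 c) := by
  unfold rotc
  split_ifs <;> fun_prop

theorem rotd_cont {n : ℕ} (a b : Fin n) (c : Fin n) :
    Continuous (fun z : ℝ × EuclideanSpace ℝ (Fin n) => rotd a b z.1 z.2 c) := by
  unfold rotd
  split_ifs <;> fun_prop

noncomputable def rotE {n : ℕ} (a b : Fin n) (hab : a ≠ b) (t : ℝ) :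
    EuclideanSpace ℝ (Fin n) ≃ₗᵢ[ℝ] EuclideanSpace ℝ (Fin n) :=
  LinearIsometry.toLinearIsometryEquiv
    { toFun := fun x => WithLp.toLp 2 (rotc a b t x)
      map_add' := by
        intro x y
        ext c
        simp only [rotc, PiLp.add_apply]
        split_ifs <;> ring
      map_smul' := by
        intro r x
        ext c
        simp only [rotc, PiLp.smul_apply, RingHom.id_apply, smul_eq_mul]
        split_ifs <;> ring
      norm_map' := by
        intro x
        simp only [LinearMap.coe_mk, AddHom.coe_mk]
        rw [EuclideanSpace.norm_eq, EuclideanSpace.norm_eq]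
        congr 1
        simp only [Real.norm_eq_abs, sq_abs]
        have hb : b ∈ Finset.univ.erase a := by simp [hab.symm]
        rw [← Finset.add_sum_erase _ _ (Finset.mem_univ a), ← Finset.add_sum_erase _ _ hb,
          ← Finset.add_sum_erase _ (fun i => x i ^ 2) (Finset.mem_univ a),
          ← Finset.add_sum_erase _ (fun i => x i ^ 2) hb, ← add_assoc, ← add_assoc]
        congr 1
        · simp only [rotc, if_true, hab, hab.symm, if_false]
          linear_combination (x a ^ 2 + x b ^ 2) * Real.sin_sq_add_cos_sq t
        · refine Finset.sum_congr rfl fun c hc => ?_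
          simp only [Finset.mem_erase] at hc
          simp [rotc, hc.1, hc.2.1] } rfl

theorem rotE_apply {n : ℕ} (a b : Fin n) (hab : a ≠ b) (t : ℝ) (x : EuclideanSpace ℝ (Fin n))
    (c : Fin n) : rotE a b hab t x c = rotc a b t x c := rfl

theorem cont_integrable (m : ℕ) (f : EuclideanSpace ℝ (Fin (m + 1)) → ℝ) (hf : Continuous f) :
    IntegrableOn f (Metric.sphere (0 : EuclideanSpace ℝ (Fin (m + 1))) 1) μH[(m : ℝ)] := by
  obtain ⟨C, hC⟩ := (isCompact_sphere (0 : EuclideanSpace ℝ (Fin (m + 1))) 1).exists_bound_of_continuousOn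
    hf.continuousOn
  exact Measure.integrableOn_of_bounded (sphere_finite m).ne hf.aestronglyMeasurable
    ((ae_restrict_iff' Metric.isClosed_sphere.measurableSet).2 (Filter.Eventually.of_forall hC))

theorem rot_inv (m : ℕ) (f : EuclideanSpace ℝ (Fin (m + 1)) → ℝ)
    (e : EuclideanSpace ℝ (Fin (m + 1)) ≃ₗᵢ[ℝ] EuclideanSpace ℝ (Fin (m + 1))) :
    ∫ x in Metric.sphere (0 : EuclideanSpace ℝ (Fin (m + 1))) 1, f (e x) ∂(μH[(m : ℝ)]) =
    ∫ x in Metric.sphere (0 : EuclideanSpace ℝ (Fin (m + 1))) 1, f x ∂(μH[(m : ℝ)]) := by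
  have h := (e.toIsometryEquiv.measurePreserving_hausdorffMeasure (m : ℝ)).setIntegral_preimage_emb
    e.toHomeomorph.measurableEmbedding f (Metric.sphere 0 1)
  have h2 : e.toIsometryEquiv ⁻¹' (Metric.sphere 0 1) = Metric.sphere 0 1 := by
    ext x; simp
  rw [h2] at h
  exact h

theorem deriv_const_integral (m : ℕ) (F F' : ℝ → EuclideanSpace ℝ (Fin (m + 1)) → ℝ) (c : ℝ)
    (hFc : Continuous (fun z : ℝ × EuclideanSpace ℝ (Fin (m + 1)) => F z.1 z.2))
    (hFc' : Continuous (fun z : ℝ × EuclideanSpace ℝ (Fin (m + 1)) => F' z.1 z.2))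
    (hd : ∀ t x, HasDerivAt (fun t => F t x) (F' t x) t)
    (hconst : ∀ t, ∫ x in Metric.sphere (0 : EuclideanSpace ℝ (Fin (m + 1))) 1,
      F t x ∂(μH[(m : ℝ)]) = c) :
    ∫ x in Metric.sphere (0 : EuclideanSpace ℝ (Fin (m + 1))) 1, F' 0 x ∂(μH[(m : ℝ)]) = 0 := by
  obtain ⟨C, hC⟩ := ((isCompact_Icc (a := (-1 : ℝ)) (b := 1)).prod
    (isCompact_sphere (0 : EuclideanSpace ℝ (Fin (m + 1))) 1)).exists_bound_of_continuousOn
      hFc'.continuousOn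
  have hslice : ∀ t, Continuous (F t) := fun t => hFc.comp (Continuous.prodMk_right t)
  have hslice' : ∀ t, Continuous (F' t) := fun t => hFc'.comp (Continuous.prodMk_right t)
  have key := (hasDerivAt_integral_of_dominated_loc_of_deriv_le
    (μ := μH[(m : ℝ)].restrict (Metric.sphere (0 : EuclideanSpace ℝ (Fin (m + 1))) 1))
    (F := F) (F' := F') (x₀ := (0 : ℝ)) (s := Set.Icc (-1) 1) (bound := fun _ => C)
    (Icc_mem_nhds (by norm_num) (by norm_num))
    (Filter.Eventually.of_forall fun t => (hslice t).aestronglyMeasurable)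
    (cont_integrable m _ (hslice 0)) (hslice' 0).aestronglyMeasurable
    ((ae_restrict_iff' Metric.isClosed_sphere.measurableSet).2
      (Filter.Eventually.of_forall fun x hx t ht => hC (t, x) ⟨ht, hx⟩))
    (cont_integrable m _ continuous_const)
    (Filter.Eventually.of_forall fun x t _ => hd t x)).2
  rw [funext hconst] at key
  exact key.unique (hasDerivAt_const (0 : ℝ) _)

/-- infinitesimal rotation invariance -/
theorem rot_infinitesimal (m : ℕ) {ι : Type*} [DecidableEq ι] (i : ι → Fin (m + 1))
    (s : Finset ι) (a b : Fin (m + 1)) (hab : a ≠ b) :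
    ∫ x in Metric.sphere (0 : EuclideanSpace ℝ (Fin (m + 1))) 1,
      (x b * ∑ l ∈ s, (∏ j ∈ s.erase l, x (i j)) *
        ((if i l = b then x a else 0) - (if i l = a then x b else 0)) +
        x a * ∏ j ∈ s, x (i j)) ∂(μH[(m : ℝ)]) = 0 := by
  have h0 := deriv_const_integral m (fun t x => rotc a b t x b * ∏ j ∈ s, rotc a b t x (i j))
    (fun t x => rotd a b t x b * (∏ j ∈ s, rotc a b t x (i j)) +
    rotc a b t x b * (∑ l ∈ s, (∏ j ∈ s.erase l, rotc a b t x (i j)) • rotd a b t x (i l)))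
    (∫ x in Metric.sphere (0 : EuclideanSpace ℝ (Fin (m + 1))) 1,
      x b * ∏ j ∈ s, x (i j) ∂μH[(m : ℝ)])
    ((rotc_cont a b b).mul (continuous_finsetProd _ fun j _ => rotc_cont a b (i j)))
    (((rotd_cont a b b).mul (continuous_finsetProd _ fun j _ => rotc_cont a b (i j))).add
      ((rotc_cont a b b).mul (continuous_finsetSum _ fun l _ =>
      (continuous_finsetProd _ fun j _ => rotc_cont a b (i j)).smul (rotd_cont a b (i l)))))
    (fun t x => (rotc_deriv a b t x b).mul
      (HasDerivAt.fun_finsetProd fun j _ => rotc_deriv a b t x (i j)))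
    (fun t => by
      rw [← rot_inv m (fun x => x b * ∏ j ∈ s, x (i j)) (rotE a b hab t)]
      simp only [rotE_apply])
  refine Eq.trans ?_ h0
  congr 1
  funext x
  have e1 : ∀ c, rotc a b 0 x c = x c := fun c => by simp [rotc]
  have e2 : ∀ c, rotd a b 0 x c = (if c = b then x a else 0) - (if c = a then x b else 0) :=
    fun c => by simp [rotd]
  simp only [e1, e2, smul_eq_mul, if_true, hab.symm, if_false, sub_zero]
  ring

/-- integration by parts on the sphere -/
theorem sphere_rec (m : ℕ) {ι : Type*} [DecidableEq ι] (i : ι → Fin (m + 1))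
    (s : Finset ι) (a : Fin (m + 1)) :
    ((m : ℝ) + s.card) * ∫ x in Metric.sphere (0 : EuclideanSpace ℝ (Fin (m + 1))) 1,
      (x a * ∏ j ∈ s, x (i j)) ∂(μH[(m : ℝ)]) =
    ∑ l ∈ s, (if i l = a then (1 : ℝ) else 0) *
      ∫ x in Metric.sphere (0 : EuclideanSpace ℝ (Fin (m + 1))) 1,
      (∏ j ∈ s.erase l, x (i j)) ∂(μH[(m : ℝ)]) := by
  set S := Metric.sphere (0 : EuclideanSpace ℝ (Fin (m + 1))) 1 with hS
  let G : Fin (m + 1) → EuclideanSpace ℝ (Fin (m + 1)) → ℝ := fun b x =>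
    (x b * ∑ l ∈ s, (∏ j ∈ s.erase l, x (i j)) *
        ((if i l = b then x a else 0) - (if i l = a then x b else 0)) +
        x a * ∏ j ∈ s, x (i j)) - (if b = a then x a * ∏ j ∈ s, x (i j) else 0)
  have hmono : ∀ t : Finset ι, Continuous fun x : EuclideanSpace ℝ (Fin (m + 1)) =>
      ∏ j ∈ t, x (i j) := fun t => by fun_prop
  have hGc : ∀ b, Continuous (G b) := by
    intro b
    refine Continuous.sub (Continuous.add (Continuous.mul (by fun_prop)
      (continuous_finsetSum _ fun l _ => (hmono _).mul ?_)) ((by fun_prop : Continuous _).mul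
        (hmono s))) ?_
    · split_ifs <;> fun_prop
    · split_ifs <;> fun_prop
  have hG : ∀ b, ∫ x in S, G b x ∂μH[(m : ℝ)] = 0 := by
    intro b
    by_cases h : b = a
    · subst h
      simp [G]
    · simp only [G, h, if_false, sub_zero]
      exact rot_infinitesimal m i s a b (fun e => h e.symm)
  have hsum : ∀ x ∈ S, ∑ b, G b x = ((m : ℝ) + s.card) * (x a * ∏ j ∈ s, x (i j)) -
      ∑ l ∈ s, (if i l = a then (1 : ℝ) else 0) * ∏ j ∈ s.erase l, x (i j) := by
    intro x hx
    have hx1 : ∑ b, x b ^ 2 = 1 := by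
      have : ‖x‖ = 1 := by simpa [hS] using hx
      have h2 := EuclideanSpace.norm_sq_eq x
      rw [this] at h2
      simpa using h2.symm
    simp only [G, Finset.sum_sub_distrib, Finset.sum_add_distrib, Finset.sum_const,
      Finset.card_univ, Fintype.card_fin, Finset.sum_ite_eq', Finset.mem_univ, if_true,
      Finset.mul_sum]
    rw [Finset.sum_comm]
    have : ∀ l ∈ s, ∑ b, x b * ((∏ j ∈ s.erase l, x (i j)) *
        ((if i l = b then x a else 0) - (if i l = a then x b else 0))) =
        x a * ∏ j ∈ s, x (i j) - (if i l = a then (1 : ℝ) else 0) * ∏ j ∈ s.erase l, x (i j) := by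
      intro l hl
      rw [← Finset.mul_prod_erase s _ hl]
      have : ∀ b, x b * ((∏ j ∈ s.erase l, x (i j)) *
        ((if i l = b then x a else 0) - (if i l = a then x b else 0))) =
        (if i l = b then x b * x a * (∏ j ∈ s.erase l, x (i j)) else 0) -
        x b ^ 2 * ((if i l = a then (1 : ℝ) else 0) * ∏ j ∈ s.erase l, x (i j)) := by
        intro b
        split_ifs <;> ring
      simp only [this, Finset.sum_sub_distrib, ← Finset.sum_mul, hx1, Finset.sum_ite_eq,
        Finset.mem_univ, if_true]
      ring
    rw [Finset.sum_congr rfl this, Finset.sum_sub_distrib, Finset.sum_const]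
    simp only [nsmul_eq_mul]
    push_cast
    ring
  have h0 : ∫ x in S, ∑ b, G b x ∂μH[(m : ℝ)] = 0 := by
    rw [integral_finsetSum _ fun b _ => cont_integrable m _ (hGc b)]
    exact Finset.sum_eq_zero fun b _ => hG b
  rw [setIntegral_congr_fun Metric.isClosed_sphere.measurableSet hsum, integral_sub,
    integral_const_mul, integral_finsetSum] at h0
  · simp only [integral_const_mul] at h0
    linarith
  · intro l _
    exact cont_integrable m _ (continuous_const.mul (hmono _))
  · exact cont_integrable m _ (by fun_prop)
  · exact cont_integrable m _ (continuous_finsetSum _ fun l _ => continuous_const.mul (hmono _))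

def pairings {α : Type*} [Fintype α] [DecidableEq α] (s : Finset α) : Finset (Finset (Finset α)) :=
  Finset.univ.filter (fun M : Finset (Finset α) =>
            (∀ p ∈ M, p.card = 2) ∧ (∀ p ∈ M, ∀ q ∈ M, p ≠ q → Disjoint p q) ∧
              M.sup id = s)

theorem mem_pairings {α : Type*} [Fintype α] [DecidableEq α] (s : Finset α) (M : Finset (Finset α)) :
    M ∈ pairings s ↔ (∀ p ∈ M, p.card = 2) ∧ (∀ p ∈ M, ∀ q ∈ M, p ≠ q → Disjoint p q) ∧
              ∀ x, x ∈ s ↔ ∃ q ∈ M, x ∈ q := by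
  simp only [pairings, Finset.mem_filter, Finset.mem_univ, true_and, Finset.ext_iff, Finset.mem_sup, id]
  constructor
  · rintro ⟨h1, h2, h3⟩
    exact ⟨h1, h2, fun x => (h3 x).symm⟩
  · rintro ⟨h1, h2, h3⟩
    exact ⟨h1, h2, fun x => (h3 x).symm⟩

theorem pairings_empty {α : Type*} [Fintype α] [DecidableEq α] :
    pairings (∅ : Finset α) = {∅} := by
  ext M
  rw [mem_pairings, Finset.mem_singleton]
  constructor
  · rintro ⟨h1, h2, h3⟩
    rw [Finset.eq_empty_iff_forall_notMem]
    intro q hq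
    have := h1 q hq
    obtain ⟨x, hx⟩ : q.Nonempty := by rw [← Finset.card_pos]; omega
    have := (h3 x).2 ⟨q, hq, hx⟩
    simp at this
  · rintro rfl
    simp

theorem notMem_of_pairings {α : Type*} [Fintype α] [DecidableEq α] {s : Finset α} {p l : α}
    {M : Finset (Finset α)} (hM : M ∈ pairings ((s.erase p).erase l)) : ({p, l} : Finset α) ∉ M := by
  intro h
  rw [mem_pairings] at hM
  have := (hM.2.2 p).2 ⟨_, h, by simp⟩
  simp at this

theorem pairings_rec {α : Type*} [Fintype α] [DecidableEq α] {s : Finset α} {p : α} (hp : p ∈ s) :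
    pairings s = (s.erase p).biUnion
      (fun l => (pairings ((s.erase p).erase l)).image (insert {p, l})) := by
  ext M
  simp only [Finset.mem_biUnion, Finset.mem_image]
  constructor
  · intro hM
    rw [mem_pairings] at hM
    obtain ⟨h1, h2, h3⟩ := hM
    obtain ⟨q, hq, hpq⟩ := (h3 p).1 hp
    obtain ⟨l, hl, rfl⟩ : ∃ l, l ≠ p ∧ q = {p, l} := by
      obtain ⟨a, b, hab, rfl⟩ := Finset.card_eq_two.1 (h1 q hq)
      simp only [Finset.mem_insert, Finset.mem_singleton] at hpq
      rcases hpq with rfl | rfl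
      · exact ⟨b, hab.symm, rfl⟩
      · exact ⟨a, hab, Finset.pair_comm _ _⟩
    refine ⟨l, Finset.mem_erase.2 ⟨hl, (h3 l).2 ⟨_, hq, by simp⟩⟩, M.erase {p, l}, ?_,
      Finset.insert_erase hq⟩
    rw [mem_pairings]
    refine ⟨fun r hr => h1 r (Finset.mem_of_mem_erase hr), fun r hr r' hr' => h2 r
      (Finset.mem_of_mem_erase hr) r' (Finset.mem_of_mem_erase hr'), fun x => ?_⟩
    simp only [Finset.mem_erase, h3]
    constructor
    · rintro ⟨hxl, hxp, r, hr, hxr⟩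
      refine ⟨r, ⟨?_, hr⟩, hxr⟩
      rintro rfl
      simp [hxl, hxp] at hxr
    · rintro ⟨r, ⟨hne, hr⟩, hxr⟩
      have hd := Finset.disjoint_left.1 (h2 r hr _ hq hne) hxr
      simp only [Finset.mem_insert, Finset.mem_singleton, not_or] at hd
      exact ⟨hd.2, hd.1, r, hr, hxr⟩
  · rintro ⟨l, hl, N, hN, rfl⟩
    rw [mem_pairings] at hN
    obtain ⟨h1, h2, h3⟩ := hN
    obtain ⟨hlp, hls⟩ := Finset.mem_erase.1 hl
    have key : ∀ r ∈ N, Disjoint ({p, l} : Finset α) r := by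
      intro r hr
      rw [Finset.disjoint_left]
      intro x hx hxr
      have := (h3 x).2 ⟨r, hr, hxr⟩
      simp only [Finset.mem_insert, Finset.mem_singleton, Finset.mem_erase] at hx this
      tauto
    rw [mem_pairings]
    refine ⟨?_, ?_, ?_⟩
    · intro r hr
      rcases Finset.mem_insert.1 hr with rfl | hr
      · exact Finset.card_pair hlp.symm
      · exact h1 r hr
    · intro r hr r' hr' hne
      rcases Finset.mem_insert.1 hr with rfl | hr <;> rcases Finset.mem_insert.1 hr' with rfl | hr'
      · exact absurd rfl hne
      · exact key _ hr'
      · exact (key _ hr).symm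
      · exact h2 r hr r' hr' hne
    · intro x
      rw [Finset.exists_mem_insert, ← h3]
      simp only [Finset.mem_insert, Finset.mem_singleton, Finset.mem_erase]
      by_cases hxp : x = p
      · subst hxp; simp [hp]
      · by_cases hxl : x = l
        · subst hxl; simp [hls]
        · simp [hxp, hxl]

theorem sum_pairings_rec {α β : Type*} [Fintype α] [DecidableEq α] [DecidableEq β] (i : α → β)
    {s : Finset α} {p : α} (hp : p ∈ s) :
    ∑ M ∈ pairings s, ∏ q ∈ M, (if ∀ a ∈ q, ∀ b ∈ q, i a = i b then (1 : ℝ) else 0) =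
    ∑ l ∈ s.erase p, (if i l = i p then (1 : ℝ) else 0) *
      ∑ M ∈ pairings ((s.erase p).erase l),
        ∏ q ∈ M, (if ∀ a ∈ q, ∀ b ∈ q, i a = i b then (1 : ℝ) else 0) := by
  rw [pairings_rec hp, Finset.sum_biUnion]
  · refine Finset.sum_congr rfl fun l hl => ?_
    rw [Finset.sum_image, Finset.mul_sum]
    · refine Finset.sum_congr rfl fun M hM => ?_
      rw [Finset.prod_insert (notMem_of_pairings hM)]
      congr 1
      by_cases h : i l = i p
      · simp [h]
      · have h' : i p ≠ i l := fun e => h e.symm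
        simp [h, h']
    · intro M hM N hN h
      have h' := congrArg (fun Z => Finset.erase Z {p, l}) h
      simpa [Finset.erase_insert (notMem_of_pairings hM),
        Finset.erase_insert (notMem_of_pairings hN)] using h'
  · intro l hl l' hl' hne
    rw [Function.onFun, Finset.disjoint_left]
    intro M hM hM'
    have hlp := (Finset.mem_erase.1 hl).1
    obtain ⟨N, hN, rfl⟩ := Finset.mem_image.1 hM
    obtain ⟨N', hN', e⟩ := Finset.mem_image.1 hM'
    have h1 : ({p, l'} : Finset α) ∈ insert {p, l} N := by rw [← e]; simp
    rcases Finset.mem_insert.1 h1 with h1 | h1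
    · have : l ∈ ({p, l'} : Finset α) := by rw [h1]; simp
      simp only [Finset.mem_insert, Finset.mem_singleton] at this
      tauto
    · rw [mem_pairings] at hN
      have := (hN.2.2 p).2 ⟨_, h1, by simp⟩
      simp at this

theorem moments (m : ℕ) (hm : 1 ≤ m) {ι : Type*} [Fintype ι] [DecidableEq ι]
    (i : ι → Fin (m + 1)) (k : ℕ) : ∀ s : Finset ι, s.card = 2 * k →
    ∫ x in Metric.sphere (0 : EuclideanSpace ℝ (Fin (m + 1))) 1,
        (∏ j ∈ s, x (i j)) ∂(μH[(m : ℝ)]) =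
      ((μH[(m : ℝ)] (Metric.sphere (0 : EuclideanSpace ℝ (Fin (m + 1))) 1)).toReal *
          (Nat.doubleFactorial (m - 1) : ℝ) / (Nat.doubleFactorial (m + 2 * k - 1) : ℝ)) *
        ∑ M ∈ pairings s,
          ∏ p ∈ M, (if ∀ a ∈ p, ∀ b ∈ p, i a = i b then (1 : ℝ) else 0) := by
  induction k with
  | zero =>
    intro s hs
    have : s = ∅ := by simpa using hs
    subst this
    rw [pairings_empty]
    have h : ((m - 1).doubleFactorial : ℝ) ≠ 0 := by
      exact_mod_cast (Nat.doubleFactorial_pos _).ne'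
    simp [Measure.real]
    field_simp
  | succ k ih =>
    intro s hs
    obtain ⟨p, hp⟩ : s.Nonempty := by rw [← Finset.card_pos]; omega
    have hcard : (s.erase p).card = 2 * k + 1 := by
      rw [Finset.card_erase_of_mem hp]; omega
    have hrec := sphere_rec m i (s.erase p) (i p)
    have hmul : ∀ x : EuclideanSpace ℝ (Fin (m + 1)),
        x (i p) * ∏ j ∈ s.erase p, x (i j) = ∏ j ∈ s, x (i j) :=
      fun x => Finset.mul_prod_erase s (fun j => x (i j)) hp
    simp only [hmul] at hrec
    rw [sum_pairings_rec i hp]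
    have h2 : ∀ l ∈ s.erase p, ((s.erase p).erase l).card = 2 * k := by
      intro l hl
      rw [Finset.card_erase_of_mem hl]; omega
    rw [Finset.sum_congr rfl fun l hl => by rw [ih _ (h2 l hl)], hcard] at hrec
    have hdf : (m + 2 * (k + 1) - 1).doubleFactorial =
        (m + 2 * k + 1) * (m + 2 * k - 1).doubleFactorial := by
      obtain ⟨n, rfl⟩ : ∃ n, m = n + 1 := ⟨m - 1, by omega⟩
      have e1 : n + 1 + 2 * (k + 1) - 1 = n + 2 * k + 2 := by omega
      have e2 : n + 1 + 2 * k - 1 = n + 2 * k := by omega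
      rw [e1, e2, Nat.doubleFactorial_add_two]
      ring
    rw [hdf]
    have h : ((m + 2 * k - 1).doubleFactorial : ℝ) ≠ 0 := by
      exact_mod_cast (Nat.doubleFactorial_pos _).ne'
    have h3 : (m : ℝ) + 2 * k + 1 ≠ 0 := by positivity
    have h4 : (m : ℝ) + ((2 * k + 1 : ℕ) : ℝ) = m + 2 * k + 1 := by push_cast; ring
    rw [h4] at hrec
    apply mul_left_cancel₀ h3
    rw [hrec]
    simp only [mul_left_comm (ite _ _ _), ← Finset.mul_sum]
    push_cast
    field_simp



/-- Even moments of the unit sphere: for any indices `i : Fin (2k) → Fin (m+1)`,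
`∫_{S^m} x_{i 1} ⋯ x_{i (2k)} dσ = (Vol(S^m)(m−1)!!/(m+2k−1)!!) Σ_M Π_{{p,q}∈M} δ_{i(p) i(q)}`,
the sum being over all partitions `M` of `{1,…,2k}` into `k` unordered pairs.  Here a partition
into pairs is encoded as a finset `M` of two-element finsets, pairwise disjoint and covering
everything, and the Kronecker factor for a pair `p ∈ M` is `1` if `i` is constant on `p` and `0`
otherwise. -/
theorem stmt_7 (m k : ℕ) (hm : 1 ≤ m) (hk : 1 ≤ k) (i : Fin (2 * k) → Fin (m + 1)) :
    ∫ x in Metric.sphere (0 : EuclideanSpace ℝ (Fin (m + 1))) 1,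
        (∏ j : Fin (2 * k), x (i j)) ∂(μH[(m : ℝ)]) =
      ((μH[(m : ℝ)] (Metric.sphere (0 : EuclideanSpace ℝ (Fin (m + 1))) 1)).toReal *
          (Nat.doubleFactorial (m - 1) : ℝ) / (Nat.doubleFactorial (m + 2 * k - 1) : ℝ)) *
        ∑ M ∈ Finset.univ.filter (fun M : Finset (Finset (Fin (2 * k))) =>
            (∀ p ∈ M, p.card = 2) ∧ (∀ p ∈ M, ∀ q ∈ M, p ≠ q → Disjoint p q) ∧
              M.sup id = Finset.univ),
          ∏ p ∈ M, (if ∀ a ∈ p, ∀ b ∈ p, i a = i b then (1 : ℝ) else 0) := by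
  have h := moments m hm i k Finset.univ (by simp)
  unfold pairings at h
  convert! h
end

section
/- Let m ≥ 1 and k ≥ 1. Let δ^{⊙k} denote the k-fold unnormalized symmetric power of the Kronecker delta tensor on ℝ^{m+1}, defined inductively by δ^{⊙1} := δ and δ^{⊙(j+1)} := δ⊙δ^{⊙j}. Then δ⌟δ^{⊙k} = k(m+2k−1)·δ^{⊙(k−1)}, where for k = 1 the right-hand side is interpreted as the scalar (m+1) (with δ^{⊙0} the empty tensor equal to 1). -/
/-- The unnormalized symmetric (shuffle) product of tensors on `Fin n`:
`(T₁ ⊙ T₂)(i) = Σ_S T₁(i∘enum S) ⋅ T₂(i∘enum Sᶜ)`, summing over `k`-element subsets `S` of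
`Fin (k+l)`, with indices enumerated in increasing order. -/
noncomputable def symProd {n k l : ℕ} (T₁ : (Fin k → Fin n) → ℝ) (T₂ : (Fin l → Fin n) → ℝ) :
    (Fin (k + l) → Fin n) → ℝ :=
  fun i => ∑ S : {S : Finset (Fin (k + l)) // S.card = k},
    T₁ (fun a => i ((S.1.orderIsoOfFin S.2 a : Fin (k + l)))) *
      T₂ (fun b => i ((S.1ᶜ.orderIsoOfFin
        (by rw [Finset.card_compl, S.2, Fintype.card_fin]; omega) b : Fin (k + l))))

/-- The Kronecker delta, as a symmetric tensor of order 2 on `Fin n`. -/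
def kdelta (n : ℕ) : (Fin 2 → Fin n) → ℝ := fun i => if i 0 = i 1 then 1 else 0

/-- Contraction of a tensor of order `k` with the Kronecker delta in its last two indices,
`(δ⌟T)(i_1,…,i_{k−2}) = Σ_p T(i_1,…,i_{k−2},p,p)`; by convention `δ⌟T = 0` when `k < 2`. -/
noncomputable def contract {n k : ℕ} (T : (Fin k → Fin n) → ℝ) : (Fin (k - 2) → Fin n) → ℝ :=
  if 2 ≤ k then
    fun i => ∑ p : Fin n, T (fun j => if hj : (j : ℕ) < k - 2 then i ⟨j, hj⟩ else p)
  else 0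

/-- Reindexing a tensor along an equality of orders. -/
def castTensor {n a b : ℕ} (h : a = b) (T : (Fin a → Fin n) → ℝ) : (Fin b → Fin n) → ℝ :=
  fun i => T (fun j => i (Fin.cast h j))

/-- The `k`-fold unnormalized symmetric power `δ^{⊙k}` of the Kronecker delta (with
`δ^{⊙0} = 1`, the empty tensor, and `δ^{⊙(j+1)} = δ ⊙ δ^{⊙j}`). -/
noncomputable def deltaPow (n : ℕ) : (k : ℕ) → (Fin (2 * k) → Fin n) → ℝ
  | 0 => fun _ => 1
  | (j + 1) => castTensor (by omega : 2 + 2 * j = 2 * (j + 1))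
      (symProd (kdelta n) (deltaPow n j))

/-- `dfac c` is `(c-1)!!` for even `c` and `0` for odd `c`. -/
noncomputable def dfac : ℕ → ℝ
  | 0 => 1
  | 1 => 0
  | (c + 2) => ((c : ℝ) + 1) * dfac c

/-- Multiplicity of the value `v` in the tuple `i`. -/
def cnt {n N : ℕ} (i : Fin N → Fin n) (v : Fin n) : ℕ :=
  (Finset.univ.filter (fun a => i a = v)).card

lemma choose_mul_dfac (c : ℕ) : ((c.choose 2 : ℕ) : ℝ) * dfac (c - 2) = (c : ℝ) / 2 * dfac c := by
  match c with
  | 0 => simp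
  | 1 => simp [dfac]
  | (c + 2) =>
    rw [Nat.cast_choose_two]
    simp only [Nat.add_sub_cancel, dfac]
    push_cast
    ring

lemma sum_cnt {n N : ℕ} (i : Fin N → Fin n) : ∑ v, cnt i v = N := by
  have := Finset.card_eq_sum_card_fiberwise (s := (Finset.univ : Finset (Fin N)))
    (t := Finset.univ) (f := i) (by intro x _; simp)
  simpa [cnt] using this.symm

lemma cnt_comp {n N l : ℕ} (i : Fin N → Fin n) (T : Finset (Fin N)) (h : T.card = l) (v : Fin n) :
    cnt (fun b => i (T.orderIsoOfFin h b : Fin N)) v = (T.filter (fun a => i a = v)).card := by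
  unfold cnt
  refine Finset.card_bij (fun b _ => (T.orderIsoOfFin h b : Fin N)) ?_ ?_ ?_
  · intro b hb
    simp only [Finset.mem_filter, Finset.mem_univ, true_and] at hb
    simp only [Finset.mem_filter]
    exact ⟨(T.orderIsoOfFin h b).2, hb⟩
  · intro a _ b _ hab
    exact (T.orderIsoOfFin h).injective (Subtype.ext hab)
  · intro a ha
    simp only [Finset.mem_filter] at ha
    refine ⟨(T.orderIsoOfFin h).symm ⟨a, ha.1⟩, ?_, ?_⟩
    · rw [Finset.mem_filter]
      refine ⟨Finset.mem_univ _, ?_⟩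
      beta_reduce
      rw [OrderIso.apply_symm_apply]
      exact ha.2
    · rw [OrderIso.apply_symm_apply]

lemma kdelta_eq {n N : ℕ} (i : Fin N → Fin n) (S : Finset (Fin N)) (h : S.card = 2) :
    kdelta n (fun a => i (S.orderIsoOfFin h a : Fin N)) =
      ∑ v, if S ⊆ Finset.univ.filter (fun a => i a = v) then (1 : ℝ) else 0 := by
  have key : ∀ v, S ⊆ Finset.univ.filter (fun a => i a = v) ↔
      (i (S.orderIsoOfFin h 0 : Fin N) = v ∧ i (S.orderIsoOfFin h 1 : Fin N) = v) := by
    intro v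
    constructor
    · intro hs
      exact ⟨(Finset.mem_filter.1 (hs (S.orderIsoOfFin h 0).2)).2,
        (Finset.mem_filter.1 (hs (S.orderIsoOfFin h 1).2)).2⟩
    · rintro ⟨h0, h1⟩ x hx
      obtain ⟨b, hb⟩ := (S.orderIsoOfFin h).surjective ⟨x, hx⟩
      have hb' : (S.orderIsoOfFin h b : Fin N) = x := by rw [hb]
      rw [Finset.mem_filter]
      refine ⟨Finset.mem_univ _, ?_⟩
      rw [← hb']
      fin_cases b
      · exact h0
      · exact h1
  have gen : ∀ x y : Fin n, (if x = y then (1 : ℝ) else 0) =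
      ∑ v, if x = v ∧ y = v then (1 : ℝ) else 0 := by
    intro x y
    by_cases hxy : x = y
    · subst hxy; simp
    · rw [if_neg hxy, Finset.sum_eq_zero]
      intro v _
      rw [if_neg]
      rintro ⟨rfl, rfl⟩
      exact hxy rfl
  unfold kdelta
  rw [gen]
  refine Finset.sum_congr rfl fun v _ => ?_
  exact if_congr (key v).symm rfl rfl

lemma card_compl_filter {n N : ℕ} (i : Fin N → Fin n) (S : Finset (Fin N)) (h : S.card = 2)
    (v : Fin n) (hs : S ⊆ Finset.univ.filter (fun a => i a = v)) (w : Fin n) :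
    (Sᶜ.filter (fun a => i a = w)).card = if w = v then cnt i v - 2 else cnt i w := by
  split_ifs with hw
  · subst hw
    rw [cnt, ← h, ← Finset.card_sdiff_of_subset hs]
    congr 1
    ext a
    simp [and_comm]
  · unfold cnt
    congr 1
    ext a
    simp only [Finset.mem_filter, Finset.mem_compl, Finset.mem_univ, true_and]
    constructor
    · exact fun h => h.2
    · intro ha
      refine ⟨fun haS => hw ?_, ha⟩
      rw [← ha]
      exact (Finset.mem_filter.1 (hs haS)).2

lemma symProd_step {n l : ℕ} (c : ℝ) (T : (Fin l → Fin n) → ℝ)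
    (hT : ∀ i, T i = c * ∏ v, dfac (cnt i v)) (i : Fin (2 + l) → Fin n) :
    symProd (kdelta n) T i = c * (((2 + l : ℕ) : ℝ) / 2) * ∏ v, dfac (cnt i v) := by
  unfold symProd
  have h1 : ∀ S : {S : Finset (Fin (2 + l)) // S.card = 2},
      kdelta n (fun a => i ((S.1.orderIsoOfFin S.2 a : Fin (2 + l)))) *
      T (fun b => i ((S.1ᶜ.orderIsoOfFin
        (by rw [Finset.card_compl, S.2, Fintype.card_fin]; omega) b : Fin (2 + l)))) =
      ∑ v, if S.1 ⊆ Finset.univ.filter (fun a => i a = v) then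
        c * (dfac (cnt i v - 2) * ∏ w ∈ Finset.univ.erase v, dfac (cnt i w)) else 0 := by
    intro S
    rw [kdelta_eq, hT, Finset.sum_mul]
    refine Finset.sum_congr rfl fun v _ => ?_
    split_ifs with hs
    · rw [one_mul]
      congr 1
      simp only [cnt_comp, card_compl_filter i S.1 S.2 v hs]
      rw [← Finset.mul_prod_erase _ _ (Finset.mem_univ v), if_pos rfl]
      congr 1
      refine Finset.prod_congr rfl fun w hw => ?_
      rw [if_neg (Finset.ne_of_mem_erase hw)]
    · simp
  rw [Finset.sum_congr rfl fun S _ => h1 S, Finset.sum_comm]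
  have h2 : ∀ v, (∑ S : {S : Finset (Fin (2 + l)) // S.card = 2},
      if S.1 ⊆ Finset.univ.filter (fun a => i a = v) then
        c * (dfac (cnt i v - 2) * ∏ w ∈ Finset.univ.erase v, dfac (cnt i w)) else 0) =
      (cnt i v : ℝ) * (c / 2 * ∏ w, dfac (cnt i w)) := by
    intro v
    have h3 : ∀ x : ℝ, (∑ S : {S : Finset (Fin (2 + l)) // S.card = 2},
        if S.1 ⊆ Finset.univ.filter (fun a => i a = v) then x else 0) =
        ((cnt i v).choose 2 : ℕ) * x := by
      intro x
      rw [← Finset.sum_subtype (Finset.univ.filter fun S : Finset (Fin (2 + l)) => S.card = 2)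
        (by simp) (fun S => if S ⊆ Finset.univ.filter (fun a => i a = v) then x else 0),
        ← Finset.sum_filter, Finset.sum_const, nsmul_eq_mul, cnt, ← Finset.card_powersetCard]
      congr 3
      ext S
      simp [Finset.mem_powersetCard, and_comm]
    rw [h3, ← Finset.mul_prod_erase _ (fun w => dfac (cnt i w)) (Finset.mem_univ v)]
    have := choose_mul_dfac (cnt i v)
    linear_combination (c * ∏ w ∈ Finset.univ.erase v, dfac (cnt i w)) * this
  rw [Finset.sum_congr rfl fun v _ => h2 v, ← Finset.sum_mul, ← Nat.cast_sum, sum_cnt]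
  ring

lemma cnt_cast {n a b : ℕ} (h : a = b) (i : Fin b → Fin n) (v : Fin n) :
    cnt (fun j => i (Fin.cast h j)) v = cnt i v := by
  subst h; rfl

lemma deltaPow_eq (n k : ℕ) (i : Fin (2 * k) → Fin n) :
    deltaPow n k i = (k.factorial : ℝ) * ∏ v, dfac (cnt i v) := by
  induction k with
  | zero =>
    have : ∀ v, cnt i v = 0 := fun v => by
      have : IsEmpty (Fin (2 * 0)) := by simpa using Fin.isEmpty
      simp [cnt]
    simp [deltaPow, this, dfac]
  | succ j ih =>
    simp only [deltaPow, castTensor]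
    rw [symProd_step _ _ ih]
    simp only [cnt_cast]
    rw [Nat.factorial_succ]
    push_cast
    ring

lemma cnt_ext {n N M : ℕ} (h : N = M + 2) (i : Fin (N - 2) → Fin n) (p v : Fin n) :
    cnt (fun j : Fin N => if hj : (j : ℕ) < N - 2 then i ⟨j, hj⟩ else p) v =
      if v = p then cnt i v + 2 else cnt i v := by
  subst h
  simp only [cnt, Finset.card_filter]
  rw [Fin.sum_univ_castSucc, Fin.sum_univ_castSucc]
  simp only [Fin.val_castSucc, Fin.val_last]
  have : ∀ x : Fin M, (x : ℕ) < M + 2 - 2 := fun x => x.2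
  have h2 : ¬ (M < M + 2 - 2) := by omega
  have h3 : ¬ (M + 1 < M + 2 - 2) := by omega
  simp only [this, h2, h3, dif_pos, dif_neg, not_false_eq_true]
  by_cases hv : v = p
  · simp [hv]
    rfl
  · simp [hv, Ne.symm hv]
    rfl

theorem stmt_11 (m k : ℕ) (hm : 1 ≤ m) (hk : 1 ≤ k) :
    contract (deltaPow (m + 1) k) =
      fun i => ((k : ℝ) * ((m : ℝ) + 2 * k - 1)) *
        castTensor (by omega : 2 * (k - 1) = 2 * k - 2) (deltaPow (m + 1) (k - 1)) i := by
  funext i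
  unfold contract
  rw [if_pos (by omega)]
  simp only [castTensor, deltaPow_eq, cnt_cast, cnt_ext (show 2 * k = 2 * (k - 1) + 2 by omega)]
  have h : ∀ p : Fin (m + 1), ∏ v, dfac (if v = p then cnt i v + 2 else cnt i v) =
      ((cnt i p : ℝ) + 1) * ∏ v, dfac (cnt i v) := by
    intro p
    rw [← Finset.mul_prod_erase _ _ (Finset.mem_univ p), if_pos rfl,
      ← Finset.mul_prod_erase _ (fun v => dfac (cnt i v)) (Finset.mem_univ p), dfac, mul_assoc]
    congr 2
    refine Finset.prod_congr rfl fun w hw => ?_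
    rw [if_neg (Finset.ne_of_mem_erase hw)]
  simp only [h]
  rw [← Finset.mul_sum, ← Finset.sum_mul, Finset.sum_add_distrib, ← Nat.cast_sum, sum_cnt]
  obtain ⟨j, rfl⟩ : ∃ j, k = j + 1 := ⟨k - 1, by omega⟩
  have hj : ((2 * (j + 1) - 2 : ℕ) : ℝ) = 2 * j := by
    rw [show 2 * (j + 1) - 2 = 2 * j by omega]
    push_cast
    ring
  rw [hj, Nat.factorial_succ]
  simp only [Nat.add_sub_cancel, Finset.sum_const, Finset.card_univ, Fintype.card_fin, nsmul_eq_mul]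
  push_cast
  ring
end

section
/- Let m ≥ 1 and let T : {1,…,m+1}³ → ℝ be a 3-tensor that is symmetric in its first two arguments, T(a,b,c) = T(b,a,c). Define S_c := (1/(m+1)) Σ_{a=1}^{m+1} T(a,a,c), and assume the contracted Bianchi-type identity Σ_{a=1}^{m+1} T(a,c,a) = ((m+1)/2)·S_c holds for every c. Then for every index 1 ≤ i ≤ m+1, ∫_{S^m} ( (1/4) Σ_{a,b,c} T(a,b,c) x_a x_b x_c − ((m+1)/(2(m+3))) Σ_{a} S_a x_a ) · x_i dσ(x) = 0. In particular, the L²(S^m)-orthogonal projection of the function x ↦ (1/4)Σ T(a,b,c)x_a x_b x_c − ((m+1)/(2(m+3)))Σ S_a x_a onto the span of the coordinate functions x_1, …, x_{m+1} vanishes. (Applied with T(a,b,c) = Ric_{ab;c}, the normalized covariant derivative of the Ricci tensor, whose trace is S_c = S_{;c} and which satisfies the contracted second Bianchi identity, this is the vanishing of the projection Π((1/4)Ric_{pq;r}x^p x^q x^r − ((m+1)/(2(m+3)))S_{;p}x^p) = 0.) -/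
open MeasureTheory

namespace Stmt14Aux

abbrev E (m : ℕ) := EuclideanSpace ℝ (Fin (m + 1))

/-- Radial parametrization of a piece of the sphere by a face of the cube. -/
noncomputable def W (m : ℕ) (i : Fin (m + 1)) (s : ℝ) (u : Fin m → ℝ) : E m :=
  WithLp.toLp 2 (i.insertNth (α := fun _ => ℝ) s u)

noncomputable def G (m : ℕ) (i : Fin (m + 1)) (s : ℝ) (u : Fin m → ℝ) : E m :=
  ‖W m i s u‖⁻¹ • W m i s u

lemma W_contDiff (m : ℕ) (i : Fin (m + 1)) (s : ℝ) : ContDiff ℝ 1 (W m i s) := by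
  rw [contDiff_euclidean]
  intro j
  refine Fin.succAboveCases i ?_ (fun k => ?_) j
  · simp [W]
    exact contDiff_const
  · simp [W]
    exact contDiff_apply ℝ ℝ k

lemma W_ne (m : ℕ) (i : Fin (m + 1)) (s : ℝ) (hs : s ≠ 0) (u) : W m i s u ≠ 0 := by
  intro h
  apply hs
  have : W m i s u i = 0 := by rw [h]; rfl
  simpa [W] using this

lemma G_contDiff (m : ℕ) (i : Fin (m + 1)) (s : ℝ) (hs : s ≠ 0) : ContDiff ℝ 1 (G m i s) := by
  unfold G
  exact (((W_contDiff m i s).norm ℝ (W_ne m i s hs)).inv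
    (fun u => norm_ne_zero_iff.2 (W_ne m i s hs u))).smul (W_contDiff m i s)

lemma G_finite (m : ℕ) (i : Fin (m + 1)) (s : ℝ) (hs : s ≠ 0) :
    μH[(m : ℝ)] (G m i s '' Metric.closedBall 0 1) < ⊤ := by
  have hl : LocallyLipschitz (G m i s) := (G_contDiff m i s hs).locallyLipschitz
  obtain ⟨K, hK⟩ := (hl.locallyLipschitzOn (s := Metric.closedBall 0 1)).exists_lipschitzOnWith_of_compact
    (isCompact_closedBall _ _)
  refine (hK.hausdorffMeasure_image_le (d := (m : ℝ)) (by positivity)).trans_lt ?_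
  have h := hausdorffMeasure_pi_real (ι := Fin m)
  rw [Fintype.card_fin] at h
  rw [h]
  refine ENNReal.mul_lt_top ?_ (isCompact_closedBall _ _).measure_lt_top
  exact ENNReal.rpow_lt_top_of_nonneg (by positivity) (by simp)

lemma sphere_finite (m : ℕ) :
    μH[(m : ℝ)] (Metric.sphere (0 : E m) 1) < ⊤ := by
  have hsub : Metric.sphere (0 : E m) 1 ⊆
      ⋃ i : Fin (m + 1), (G m i 1 '' Metric.closedBall 0 1 ∪ G m i (-1) '' Metric.closedBall 0 1) := by
    intro x hx
    have hx1 : ‖x‖ = 1 := by simpa using hx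
    obtain ⟨i, hi⟩ := Finite.exists_max (fun j => |x j|)
    have hpos : 0 < |x i| := by
      by_contra hcon
      have : x = 0 := by
        ext j
        have := hi j
        have h2 := abs_nonneg (x j)
        have : |x j| = 0 := by linarith
        simpa using this
      rw [this] at hx1
      simp at hx1
    let u : Fin m → ℝ := fun j => x (i.succAbove j) / |x i|
    have hu : u ∈ Metric.closedBall (0 : Fin m → ℝ) 1 := by
      rw [mem_closedBall_zero_iff, pi_norm_le_iff_of_nonneg zero_le_one]
      intro j
      simp only [u, norm_div, Real.norm_eq_abs, abs_abs]
      rw [div_le_one hpos]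
      exact hi _
    have key : ∀ s : ℝ, s * |x i| = x i → G m i s u = x := by
      intro s hs
      have hW : W m i s u = |x i|⁻¹ • x := by
        ext j
        refine Fin.succAboveCases i ?_ (fun k => ?_) j
        · simp only [W, PiLp.smul_apply, smul_eq_mul, Fin.insertNth_apply_same]
          rw [← hs, abs_mul, abs_abs]
          have : |s| = 1 := by
            have h3 : |s| * |x i| = |x i| := by
              conv_rhs => rw [← hs]
              rw [abs_mul, abs_abs]
            exact mul_right_cancel₀ hpos.ne' (by rw [h3, one_mul])
          rw [this]
          field_simp
        · simp only [W, PiLp.smul_apply, smul_eq_mul, Fin.insertNth_apply_succAbove, u]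
          rw [div_eq_inv_mul]
      rw [G, hW, norm_smul, hx1, smul_smul]
      simp [hpos.ne', abs_pos.1 hpos]
    rw [Set.mem_iUnion]
    refine ⟨i, ?_⟩
    rcases le_total 0 (x i) with h | h
    · exact Or.inl ⟨u, hu, key 1 (by rw [abs_of_nonneg h, one_mul])⟩
    · exact Or.inr ⟨u, hu, key (-1) (by rw [abs_of_nonpos h]; ring)⟩
  refine (measure_mono hsub).trans_lt ?_
  refine (measure_iUnion_fintype_le _ _).trans_lt ?_
  rw [ENNReal.sum_lt_top]
  intro i _
  exact (measure_union_le _ _).trans_lt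
    (ENNReal.add_lt_top.2 ⟨G_finite m i 1 one_ne_zero, G_finite m i (-1) (by norm_num)⟩)

/-- Surface measure. -/
noncomputable def sig (m : ℕ) : Measure (E m) := (μH[(m : ℝ)]).restrict (Metric.sphere (0 : E m) 1)

lemma integrable_cont (m : ℕ) (f : E m → ℝ) (hf : Continuous f) : Integrable f (sig m) := by
  haveI : IsFiniteMeasureOnCompacts (sig m) := by
    haveI : IsFiniteMeasure (sig m) := ⟨by
      rw [sig, Measure.restrict_apply_univ]; exact sphere_finite m⟩
    infer_instance
  have h : IntegrableOn f (Metric.sphere (0 : E m) 1) (sig m) :=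
    hf.continuousOn.integrableOn_compact (isCompact_sphere _ _)
  rw [IntegrableOn, sig, Measure.restrict_restrict Metric.isClosed_sphere.measurableSet,
    Set.inter_self] at h
  exact h

lemma integral_refl (m : ℕ) (v : E m) (f : E m → ℝ) :
    ∫ x, f ((2 * (inner ℝ v x / ‖v‖ ^ 2)) • v - x) ∂(sig m) = ∫ x, f x ∂(sig m) := by
  let e : E m ≃ₗᵢ[ℝ] E m := (Submodule.span ℝ {v}).reflection
  have he : ∀ x, e x = (2 * (inner ℝ v x / ‖v‖ ^ 2)) • v - x := by
    intro x
    have := Submodule.reflection_singleton_apply (𝕜 := ℝ) v x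
    simp only [e]
    rw [this, mul_smul, two_smul, two_smul]
    rfl
  have hmp : MeasurePreserving e.toIsometryEquiv (μH[(m : ℝ)]) (μH[(m : ℝ)]) :=
    e.toIsometryEquiv.measurePreserving_hausdorffMeasure _
  have := hmp.setIntegral_preimage_emb
    e.toIsometryEquiv.toHomeomorph.measurableEmbedding f (Metric.sphere (0 : E m) 1)
  have hpre : e.toIsometryEquiv ⁻¹' (Metric.sphere (0 : E m) 1) = Metric.sphere (0 : E m) 1 := by
    ext x
    simp
  rw [hpre] at this
  rw [sig, ← this]
  congr 1
  ext x
  rw [← he]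
  rfl

/-- Fourth moments. -/
noncomputable def M (m : ℕ) (a b c d : Fin (m + 1)) : ℝ := ∫ x, x a * x b * x c * x d ∂(sig m)

def sg {m : ℕ} (k a : Fin (m + 1)) : ℝ := if a = k then 1 else -1

lemma M_flip (m : ℕ) (k a b c d : Fin (m + 1)) :
    M m a b c d = sg k a * sg k b * sg k c * sg k d * M m a b c d := by
  have h := integral_refl m (EuclideanSpace.single k 1) (fun x => x a * x b * x c * x d)
  have hc : ∀ (x : E m) j, ((2 * (inner ℝ (EuclideanSpace.single k (1 : ℝ)) x /
      ‖(EuclideanSpace.single k (1 : ℝ) : E m)‖ ^ 2)) •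
      (EuclideanSpace.single k (1 : ℝ) : E m) - x) j = sg k j * x j := by
    intro x j
    simp [EuclideanSpace.inner_single_left, sg, Pi.single_apply]
    split_ifs with h
    · subst h; ring
    · ring
  simp only [hc] at h
  rw [M]
  conv_lhs => rw [← h]
  rw [← integral_const_mul]
  congr 1
  ext x
  ring

lemma integral_two (m : ℕ) (a b : Fin (m + 1)) (hab : a ≠ b) (p q : ℝ) (hpq : p ^ 2 + q ^ 2 ≠ 0) :
    ∫ x : E m, (2 * ((p * x a + q * x b) / (p ^ 2 + q ^ 2)) * p - x a) ^ 4 ∂(sig m)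
      = M m a a a a := by
  have h := integral_refl m (EuclideanSpace.single a p + EuclideanSpace.single b q)
    (fun x => x a * x a * x a * x a)
  have hn : ‖(EuclideanSpace.single a p + EuclideanSpace.single b q : E m)‖ ^ 2 = p ^ 2 + q ^ 2 := by
    rw [← real_inner_self_eq_norm_sq, inner_add_left, EuclideanSpace.inner_single_left,
      EuclideanSpace.inner_single_left]
    simp [hab, hab.symm]
    ring
  rw [M, ← h, hn]
  congr 1
  ext x
  simp [inner_add_left, EuclideanSpace.inner_single_left, Pi.single_apply, hab]
  ring

lemma M_swap (m : ℕ) (a b : Fin (m + 1)) : M m a a a a = M m b b b b := by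
  by_cases hab : a = b
  · rw [hab]
  rw [← integral_two m a b hab 1 1 (by norm_num), M]
  congr 1
  ext x
  ring

lemma M_pair (m : ℕ) (a b : Fin (m + 1)) (hab : a ≠ b) : M m a a b b = M m a a a a / 3 := by
  have h := integral_two m a b hab 2 (-1) (by norm_num)
  have e : ∀ x : E m, (2 * ((2 * x a + (-1) * x b) / (2 ^ 2 + (-1) ^ 2)) * 2 - x a) ^ 4
      = (81 / 625) * (x a * x a * x a * x a) + (256 / 625) * (x b * x b * x b * x b)
        + (864 / 625) * (x a * x a * x b * x b) - (432 / 625) * (x a * x a * x a * x b)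
        - (768 / 625) * (x a * x b * x b * x b) := by
    intro x; ring
  simp only [e] at h
  have h1 := M_flip m a a a a b
  have h2 := M_flip m a a b b b
  simp only [sg, hab.symm, if_true, if_false] at h1 h2
  have h3 := M_swap m b a
  rw [integral_sub, integral_sub, integral_add, integral_add, integral_const_mul,
    integral_const_mul, integral_const_mul, integral_const_mul, integral_const_mul] at h
  · simp only [M] at h h1 h2 h3 ⊢
    linarith
  all_goals exact integrable_cont m _ (by fun_prop)

noncomputable def Bc (m : ℕ) : ℝ := M m 0 0 0 0 / 3

def dl {m : ℕ} (a b : Fin (m + 1)) : ℝ := if a = b then 1 else 0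

lemma M_perm1 (m : ℕ) (a b c d : Fin (m + 1)) : M m a b c d = M m a c b d := by
  simp only [M]; congr 1; ext x; ring
lemma M_perm2 (m : ℕ) (a b c d : Fin (m + 1)) : M m a b c d = M m a b d c := by
  simp only [M]; congr 1; ext x; ring

lemma M_eq (m : ℕ) (a b c d : Fin (m + 1)) :
    M m a b c d = Bc m * (dl a b * dl c d + dl a c * dl b d + dl a d * dl b c) := by
  have h0 : M m a a a a = 3 * Bc m := by rw [M_swap m a 0, Bc]; ring
  by_cases hab : a = b
  · subst hab
    by_cases hcd : c = d
    · subst hcd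
      by_cases hac : a = c
      · subst hac; simp only [dl, if_true]; linarith
      · have := M_pair m a c hac
        simp only [dl, if_true, hac, if_false]; linarith
    · have h := M_flip m c a a c d
      have hdc : ¬ d = c := fun h => hcd h.symm
      have h' : M m a a c d = 0 := by
        simp only [sg, if_true, hdc, if_false] at h
        split_ifs at h <;> linarith
      rw [h']
      simp only [dl, hcd, if_false]
      by_cases hac : a = c
      · subst hac; simp [hcd]
      · simp [hac]
  · have hba : ¬ b = a := fun h => hab h.symm
    by_cases hac : a = c
    · subst hac
      by_cases hbd : b = d
      · subst hbd
        have := M_pair m a b hab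
        rw [M_perm1]
        simp only [dl, if_true, hab, hba, if_false]; linarith
      · have h := M_flip m b a b a d
        have hdb : ¬ d = b := fun h => hbd h.symm
        have h' : M m a b a d = 0 := by
          simp only [sg, if_true, hdb, hab, if_false] at h
          linarith
        rw [h']
        simp [dl, hab, hbd, hba]
    · have hca : ¬ c = a := fun h => hac h.symm
      by_cases had : a = d
      · subst had
        by_cases hbc : b = c
        · subst hbc
          have := M_pair m a b hab
          rw [M_perm2, M_perm1]
          simp only [dl, if_true, hab, hba, if_false]; linarith
        · have h := M_flip m b a b c a
          have hcb : ¬ c = b := fun h => hbc h.symm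
          have h' : M m a b c a = 0 := by
            simp only [sg, if_true, hcb, hab, if_false] at h
            linarith
          rw [h']
          simp [dl, hab, hac, hbc]
      · have hda : ¬ d = a := fun h => had h.symm
        have h := M_flip m a a b c d
        have h' : M m a b c d = 0 := by
          simp only [sg, if_true, hba, hca, hda, if_false] at h
          linarith
        rw [h']
        simp [dl, hab, hac, had]

lemma second (m : ℕ) (a i : Fin (m + 1)) :
    ∫ x : E m, x a * x i ∂(sig m) = Bc m * ((m : ℝ) + 3) * dl a i := by
  have h : ∫ x : E m, x a * x i ∂(sig m) = ∑ b, M m a i b b := by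
    simp only [M]
    rw [← integral_finsetSum _ (fun b _ => integrable_cont m _ (by fun_prop))]
    refine setIntegral_congr_fun Metric.isClosed_sphere.measurableSet ?_
    intro x hx
    have hx1 : ‖x‖ = 1 := by simpa using hx
    have h2 : ∑ b, x b * x b = 1 := by
      have := EuclideanSpace.real_norm_sq_eq x
      rw [hx1] at this
      simp only [← sq]
      linarith
    simp only [mul_assoc]
    rw [← Finset.mul_sum, ← Finset.mul_sum, h2, mul_one]
  rw [h]
  simp only [M_eq]
  rw [← Finset.mul_sum, mul_assoc]
  congr 1
  simp [dl, Finset.sum_add_distrib]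
  split_ifs with h <;> simp_all <;> ring

end Stmt14Aux

open Stmt14Aux in
/-- Let `T` be a 3-tensor on `ℝ^{m+1}` symmetric in its first two arguments, with trace
`S_c = (1/(m+1)) Σ_a T(a,a,c)`, satisfying the contracted Bianchi-type identity
`Σ_a T(a,c,a) = ((m+1)/2) S_c`.  Then for every coordinate index `i`,
`∫_{S^m} ((1/4) Σ_{a,b,c} T(a,b,c) x_a x_b x_c − ((m+1)/(2(m+3))) Σ_a S_a x_a) x_i dσ = 0`,
where `σ` is the `m`-dimensional Hausdorff (surface) measure on `S^m ⊆ ℝ^{m+1}`; i.e. the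
`L²`-projection onto the span of the coordinate functions vanishes. -/
theorem stmt_14 (m : ℕ) (hm : 1 ≤ m)
    (T : Fin (m + 1) → Fin (m + 1) → Fin (m + 1) → ℝ)
    (hsymT : ∀ a b c, T a b c = T b a c)
    (S : Fin (m + 1) → ℝ)
    (hS : ∀ c, S c = (1 / ((m : ℝ) + 1)) * ∑ a, T a a c)
    (hBianchi : ∀ c, ∑ a, T a c a = (((m : ℝ) + 1) / 2) * S c)
    (i : Fin (m + 1)) :
    ∫ x in Metric.sphere (0 : EuclideanSpace ℝ (Fin (m + 1))) 1,
        ((1 / 4) * (∑ a, ∑ b, ∑ c, T a b c * x a * x b * x c) -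
            (((m : ℝ) + 1) / (2 * ((m : ℝ) + 3))) * ∑ a, S a * x a) * x i ∂(μH[(m : ℝ)]) = 0 := by
  change ∫ x : E m, _ ∂(sig m) = 0
  have e : ∀ x : E m, ((1 / 4) * (∑ a, ∑ b, ∑ c, T a b c * x a * x b * x c) -
            (((m : ℝ) + 1) / (2 * ((m : ℝ) + 3))) * ∑ a, S a * x a) * x i
      = (1 / 4) * (∑ a, ∑ b, ∑ c, T a b c * (x a * x b * x c * x i)) -
        (((m : ℝ) + 1) / (2 * ((m : ℝ) + 3))) * ∑ a, S a * (x a * x i) := by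
    intro x
    simp only [sub_mul, mul_assoc, Finset.sum_mul]
  simp only [e]
  rw [integral_sub (integrable_cont m _ (by fun_prop)) (integrable_cont m _ (by fun_prop)),
    integral_const_mul, integral_const_mul,
    integral_finsetSum _ (fun b _ => integrable_cont m _ (by fun_prop)),
    integral_finsetSum _ (fun b _ => integrable_cont m _ (by fun_prop))]
  have h3 : ∀ a, ∫ x : E m, ∑ b, ∑ c, T a b c * (x a * x b * x c * x i) ∂(sig m)
      = ∑ b, ∑ c, T a b c * M m a b c i := by
    intro a
    rw [integral_finsetSum _ (fun b _ => integrable_cont m _ (by fun_prop))]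
    refine Finset.sum_congr rfl fun b _ => ?_
    rw [integral_finsetSum _ (fun b _ => integrable_cont m _ (by fun_prop))]
    refine Finset.sum_congr rfl fun c _ => ?_
    rw [integral_const_mul, M]
  simp only [h3, integral_const_mul, second, M_eq]
  generalize Bc m = B
  have hm3 : (m : ℝ) + 3 ≠ 0 := by positivity
  have hm1 : (m : ℝ) + 1 ≠ 0 := by positivity
  have t1 : ∑ a, ∑ b, ∑ c, T a b c * (B * (dl a b * dl c i + dl a c * dl b i + dl a i * dl b c))
      = B * (∑ a, T a a i + ∑ a, T a i a + ∑ a, T i a a) := by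
    simp only [mul_add, Finset.sum_add_distrib, dl]
    simp [Finset.mul_sum, mul_comm]
  have t2 : ∑ a, S a * (B * ((m : ℝ) + 3) * dl a i) = B * ((m : ℝ) + 3) * S i := by
    simp [dl, mul_comm]
  rw [t1, t2]
  have b1 : ∑ a, T i a a = ((m : ℝ) + 1) / 2 * S i := by
    rw [← hBianchi]
    exact Finset.sum_congr rfl fun a _ => hsymT i a a
  have b2 : ∑ a, T a a i = ((m : ℝ) + 1) * S i := by
    rw [hS]; field_simp
  rw [b1, b2, hBianchi]
  field_simp
  ring
end
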